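/- Minimum upload cost of capacity achieving RIR_max (Corollary 4): for all integers N ≥ 2 and K ≥ 1, every RIR_max scheme with K messages, N databases, and rate R = L_w/(N·L_x) = C_K(N) must have M_n ≥ N^{K−1} for every database n ∈ {1,…,N} (i.e., upload cost at least (K−1)·log N bits per database), and there exists a capacity achieving RIR_max scheme with M_n = N^{K−1} for every n. -/

import Mathlib

open scoped BigOperators

noncomputable section

/-- A finite probability space: a finite type together with a probability mass function. -/
structure FinProbSpace where
  Ω : Type
  [fin : Fintype Ω]
  p : Ω → ℝ
  nonneg : ∀ ω, 0 ≤ p ω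
  sum_one : ∑ ω, p ω = 1

attribute [instance] FinProbSpace.fin

namespace FinProbSpace

variable (P : FinProbSpace)

/-- Probability that the random variable `X` takes the value `a`. -/
def prob {α : Type} [DecidableEq α] (X : P.Ω → α) (a : α) : ℝ :=
  ∑ ω, if X ω = a then P.p ω else 0

/-- Shannon entropy (in bits) of a finitely valued random variable. -/
def H {α : Type} [Fintype α] [DecidableEq α] (X : P.Ω → α) : ℝ :=
  ∑ a, -(P.prob X a * Real.logb 2 (P.prob X a))

/-- Conditional Shannon entropy `H(X | Y) = H(X, Y) - H(Y)` (in bits). -/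
def condH {α β : Type} [Fintype α] [DecidableEq α] [Fintype β] [DecidableEq β]
    (X : P.Ω → α) (Y : P.Ω → β) : ℝ :=
  P.H (fun ω => (X ω, Y ω)) - P.H Y

/-- The tuple random variable `(X_i)_{i ∈ ι}`. -/
def tuple {ι V : Type} (X : ι → P.Ω → V) : P.Ω → ι → V := fun ω i => X i ω

/-- Joint (mutual) independence of a finite family of random variables. -/
def iIndep {ι V : Type} [Fintype ι] [DecidableEq ι] [DecidableEq V] (X : ι → P.Ω → V) : Prop :=
  ∀ a : ι → V, P.prob (P.tuple X) a = ∏ i, P.prob (X i) (a i)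

/-- `X` and `Y` contain the same information about everything beyond `Z`:
`H(X | Y, Z) = H(Y | X, Z) = 0`. -/
def sameInfo {α β γ : Type} [Fintype α] [DecidableEq α] [Fintype β] [DecidableEq β]
    [Fintype γ] [DecidableEq γ] (X : P.Ω → α) (Y : P.Ω → β) (Z : P.Ω → γ) : Prop :=
  P.condH X (fun ω => (Y ω, Z ω)) = 0 ∧ P.condH Y (fun ω => (X ω, Z ω)) = 0

end FinProbSpace

/-- A locally decodable code with `K` source symbols of entropy `Lw`, `M` coded symbols of
entropy `Lx`, and locality `N`. -/
structure LDC (K N M : ℕ) (Lw Lx : ℝ) where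
  P : FinProbSpace
  V : Type
  [fV : Fintype V]
  [dV : DecidableEq V]
  V' : Type
  [fV' : Fintype V']
  [dV' : DecidableEq V']
  /-- the source symbols -/
  W : Fin K → P.Ω → V
  /-- the coded symbols -/
  X : Fin M → P.Ω → V'
  indep : P.iIndep W
  HW : ∀ k, P.H (W k) = Lw
  coded_fn : ∀ m, ∃ f : (Fin K → V) → V', ∀ ω, X m ω = f (fun k => W k ω)
  HX : ∀ m, P.H (X m) = Lx
  /-- the decoding supersets -/
  decSets : Fin K → Finset (Finset (Fin M))
  decSets_nonempty : ∀ k, (decSets k).Nonempty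
  decSets_card : ∀ k, ∀ s ∈ decSets k, s.card = N
  decodes : ∀ k, ∀ s ∈ decSets k,
    P.condH (W k) (P.tuple fun i : {x // x ∈ s} => X i.1) = 0

attribute [instance] LDC.fV LDC.dV LDC.fV' LDC.dV'

/-- A universal LDC: every coded symbol appears in some decoding set of every source symbol. -/
def LDC.IsUniversal {K N M : ℕ} {Lw Lx : ℝ} (C : LDC K N M Lw Lx) : Prop :=
  ∀ (m : Fin M) (k : Fin K), ∃ s ∈ C.decSets k, m ∈ s

/-- A perfectly smooth LDC: for each source symbol, every coded symbol lies in the same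
number of decoding sets. -/
def LDC.IsSmooth {K N M : ℕ} {Lw Lx : ℝ} (C : LDC K N M Lw Lx) : Prop :=
  ∀ (k : Fin K) (m m' : Fin M),
    ((C.decSets k).filter (fun s => m ∈ s)).card =
      ((C.decSets k).filter (fun s => m' ∈ s)).card

/-- `C*(N, K) = N (1 + 1/N + ⋯ + 1/N^{K-1})⁻¹`. -/
def Cstar (N K : ℕ) : ℝ := N / (∑ j ∈ Finset.range K, (1 / (N : ℝ)) ^ j)

/-- An `N`-query information retrieval scheme with `K` messages of entropy `Lw` and
answer sets of sizes `Mn n` with answers of entropy `Lx`. -/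
structure IRScheme (K N : ℕ) (Mn : Fin N → ℕ) (Lw Lx : ℝ) where
  P : FinProbSpace
  V : Type
  [fV : Fintype V]
  [dV : DecidableEq V]
  V' : Type
  [fV' : Fintype V']
  [dV' : DecidableEq V']
  /-- the messages -/
  W : Fin K → P.Ω → V
  /-- `A n m` is the `m`-th possible answer of database `n` -/
  A : (n : Fin N) → Fin (Mn n) → P.Ω → V'
  indep : P.iIndep W
  HW : ∀ k, P.H (W k) = Lw
  ans_fn : ∀ n m, ∃ f : (Fin K → V) → V', ∀ ω, A n m ω = f (fun k => W k ω)
  HA : ∀ n m, P.H (A n m) = Lx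
  /-- the decoding supersets: each decoding set consists of one answer index per database -/
  Q : Fin K → Finset ((n : Fin N) → Fin (Mn n))
  Q_nonempty : ∀ k, (Q k).Nonempty
  decodes : ∀ k, ∀ q ∈ Q k, P.condH (W k) (P.tuple fun n => A n (q n)) = 0

attribute [instance] IRScheme.fV IRScheme.dV IRScheme.fV' IRScheme.dV'

/-- A repudiative (RIR_max) scheme: every possible answer of every database appears in some
decoding set of every message. -/
def IRScheme.IsRIR {K N : ℕ} {Mn : Fin N → ℕ} {Lw Lx : ℝ} (C : IRScheme K N Mn Lw Lx) : Prop :=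
  ∀ (n : Fin N) (m : Fin (Mn n)) (k : Fin K), ∃ q ∈ C.Q k, q n = m

/-- A perfectly private (PIR_max) scheme: for each message there is a distribution on its
decoding sets such that the marginal distribution of the query to each database does not
depend on the message. -/
def IRScheme.IsPIR {K N : ℕ} {Mn : Fin N → ℕ} {Lw Lx : ℝ} (C : IRScheme K N Mn Lw Lx) : Prop :=
  ∃ μ : Fin K → ((n : Fin N) → Fin (Mn n)) → ℝ,
    (∀ k q, 0 ≤ μ k q) ∧ (∀ k, ∑ q ∈ C.Q k, μ k q = 1) ∧
    (∀ (k k' : Fin K) (n : Fin N) (m : Fin (Mn n)),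
      ∑ q ∈ (C.Q k).filter (fun q => q n = m), μ k q =
        ∑ q ∈ (C.Q k').filter (fun q => q n = m), μ k' q)

/-- `C_K(N) = (1 + 1/N + ⋯ + 1/N^{K-1})⁻¹`, the capacity of PIR. -/
def CK (N K : ℕ) : ℝ := (∑ j ∈ Finset.range K, (1 / (N : ℝ)) ^ j)⁻¹

namespace FinProbSpace

variable (P : FinProbSpace)

theorem prob_nonneg {α : Type} [DecidableEq α] (X : P.Ω → α) (a : α) : 0 ≤ P.prob X a :=
  Finset.sum_nonneg fun ω _ => by split_ifs <;> simp [P.nonneg]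

theorem le_prob {α : Type} [DecidableEq α] (X : P.Ω → α) (ω : P.Ω) : P.p ω ≤ P.prob X (X ω) := by
  have := Finset.single_le_sum (f := fun ω' => if X ω' = X ω then P.p ω' else 0)
    (fun ω' _ => by split_ifs <;> simp [P.nonneg]) (Finset.mem_univ ω)
  simpa [prob] using this

theorem prob_pos {α : Type} [DecidableEq α] (X : P.Ω → α) {ω : P.Ω} (h : 0 < P.p ω) :
    0 < P.prob X (X ω) := h.trans_le (P.le_prob X ω)

/-- Expectation of a function of a random variable. -/
theorem sum_prob_mul {α : Type} [Fintype α] [DecidableEq α] (X : P.Ω → α) (f : α → ℝ) :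
    ∑ a, P.prob X a * f a = ∑ ω, P.p ω * f (X ω) := by
  simp only [prob, Finset.sum_mul, ite_mul, zero_mul]
  rw [Finset.sum_comm]
  simp

theorem sum_prob {α : Type} [Fintype α] [DecidableEq α] (X : P.Ω → α) :
    ∑ a, P.prob X a = 1 := by
  simpa [P.sum_one] using P.sum_prob_mul X fun _ => 1

theorem H_eq_sum {α : Type} [Fintype α] [DecidableEq α] (X : P.Ω → α) :
    P.H X = -∑ ω, P.p ω * Real.logb 2 (P.prob X (X ω)) := by
  rw [H, Finset.sum_neg_distrib, P.sum_prob_mul X fun a => Real.logb 2 (P.prob X a)]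

theorem H_congr {α β : Type} [Fintype α] [DecidableEq α] [Fintype β] [DecidableEq β]
    {X : P.Ω → α} {Y : P.Ω → β} (h : ∀ ω ω', X ω = X ω' ↔ Y ω = Y ω') : P.H X = P.H Y := by
  simp only [H_eq_sum, prob, h]

theorem H_const {α : Type} [Fintype α] [DecidableEq α] {X : P.Ω → α}
    (h : ∀ ω ω', X ω = X ω') : P.H X = 0 := by
  have : ∀ ω, P.prob X (X ω) = 1 := fun ω => by simp [prob, h _ ω, P.sum_one]
  simp [H_eq_sum, this]

theorem H_mono {α β : Type} [Fintype α] [DecidableEq α] [Fintype β] [DecidableEq β]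
    {X : P.Ω → α} {Y : P.Ω → β} (h : ∀ ω ω', X ω = X ω' → Y ω = Y ω') : P.H Y ≤ P.H X := by
  rw [H_eq_sum, H_eq_sum, neg_le_neg_iff]
  refine Finset.sum_le_sum fun ω _ => ?_
  rcases (P.nonneg ω).eq_or_lt with h0 | h0
  · simp [← h0]
  refine mul_le_mul_of_nonneg_left ?_ h0.le
  refine Real.logb_le_logb_of_le one_lt_two (P.prob_pos X h0) ?_
  refine Finset.sum_le_sum fun ω' _ => ?_
  by_cases hx : X ω' = X ω
  · simp [hx, h _ _ hx]
  · rw [if_neg hx]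
    split_ifs <;> simp [P.nonneg]

theorem sum_prob_fiber {β γ : Type} [Fintype β] [DecidableEq β] [DecidableEq γ]
    (Y : P.Ω → β) (g : β → γ) (c : γ) :
    ∑ y, (if g y = c then P.prob Y y else 0) = P.prob (g ∘ Y) c := by
  have := P.sum_prob_mul Y fun y => if g y = c then 1 else 0
  simpa [prob] using this

theorem sum_ratio_le_one {α β γ : Type} [Fintype α] [DecidableEq α] [Fintype β] [DecidableEq β]
    [Fintype γ] [DecidableEq γ] (X : P.Ω → α) (Y : P.Ω → β) (f : α → γ) (g : β → γ)
    (hfg : f ∘ X = g ∘ Y) :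
    ∑ ω, P.p ω * (P.prob X (X ω) * P.prob Y (Y ω) /
      (P.prob (fun ω => (X ω, Y ω)) (X ω, Y ω) * P.prob (f ∘ X) (f (X ω)))) ≤ 1 := by
  have hXY : ∀ ω, f (X ω) = g (Y ω) := fun ω => congrFun hfg ω
  rw [← P.sum_prob_mul (fun ω => (X ω, Y ω)) fun a =>
    P.prob X a.1 * P.prob Y a.2 / (P.prob (fun ω => (X ω, Y ω)) a * P.prob (f ∘ X) (f a.1))]
  calc _ ≤ ∑ a : α × β, P.prob X a.1 / P.prob (f ∘ X) (f a.1) *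
          (if g a.2 = f a.1 then P.prob Y a.2 else 0) := by
        refine Finset.sum_le_sum fun a _ => ?_
        rcases (P.prob_nonneg (fun ω => (X ω, Y ω)) a).eq_or_lt with h0 | h0
        · rw [← h0, zero_mul]
          have h1 := P.prob_nonneg X a.1
          have h2 := P.prob_nonneg Y a.2
          have h3 := P.prob_nonneg (f ∘ X) (f a.1)
          split_ifs <;> positivity
        · have : g a.2 = f a.1 := by
            by_contra hne
            refine h0.ne' (Finset.sum_eq_zero fun ω _ => if_neg fun h => hne ?_)
            rw [← h]
            exact (hXY ω).symm
          rw [if_pos this]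
          apply le_of_eq
          field_simp
    _ = ∑ x, P.prob X x / P.prob (f ∘ X) (f x) * P.prob (f ∘ X) (f x) := by
        rw [Fintype.sum_prod_type]
        refine Finset.sum_congr rfl fun x _ => ?_
        simp only
        rw [← Finset.mul_sum, P.sum_prob_fiber, hfg]
    _ ≤ ∑ x, P.prob X x := by
        refine Finset.sum_le_sum fun x _ => ?_
        by_cases h : P.prob (f ∘ X) (f x) = 0
        · simp [h, P.prob_nonneg]
        · rw [div_mul_cancel₀ _ h]
    _ = 1 := P.sum_prob X

theorem H_submodular {α β γ : Type} [Fintype α] [DecidableEq α] [Fintype β] [DecidableEq β]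
    [Fintype γ] [DecidableEq γ] (X : P.Ω → α) (Y : P.Ω → β) (f : α → γ) (g : β → γ)
    (hfg : f ∘ X = g ∘ Y) :
    P.H (fun ω => (X ω, Y ω)) + P.H (f ∘ X) ≤ P.H X + P.H Y := by
  have key : ∑ ω, P.p ω * (Real.log (P.prob X (X ω)) + Real.log (P.prob Y (Y ω)) -
      Real.log (P.prob (fun ω => (X ω, Y ω)) (X ω, Y ω)) -
      Real.log (P.prob (f ∘ X) (f (X ω)))) ≤ 0 := by
    calc _ ≤ ∑ ω, (P.p ω * (P.prob X (X ω) * P.prob Y (Y ω) /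
            (P.prob (fun ω => (X ω, Y ω)) (X ω, Y ω) * P.prob (f ∘ X) (f (X ω)))) - P.p ω) := by
          refine Finset.sum_le_sum fun ω _ => ?_
          rcases (P.nonneg ω).eq_or_lt with h0 | h0
          · simp [← h0]
          have hX := P.prob_pos X h0
          have hY := P.prob_pos Y h0
          have hXY := P.prob_pos (fun ω => (X ω, Y ω)) h0
          have hZ : 0 < P.prob (f ∘ X) (f (X ω)) := P.prob_pos (f ∘ X) h0
          rw [← mul_sub_one]
          refine mul_le_mul_of_nonneg_left ?_ h0.le
          rw [sub_sub, ← Real.log_mul hX.ne' hY.ne', ← Real.log_mul hXY.ne' hZ.ne',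
            ← Real.log_div (by positivity) (by positivity)]
          exact Real.log_le_sub_one_of_pos (by positivity)
      _ ≤ 0 := by
          rw [Finset.sum_sub_distrib, P.sum_one]
          linarith [P.sum_ratio_le_one X Y f g hfg]
  have h2 : 0 < Real.log 2 := Real.log_pos one_lt_two
  simp only [H_eq_sum, Real.logb, Function.comp_apply]
  simp only [mul_sub, mul_add, Finset.sum_sub_distrib, Finset.sum_add_distrib,
    ← mul_div_assoc, ← Finset.sum_div] at key ⊢
  rw [← neg_div, ← neg_div, ← neg_div, ← neg_div, ← add_div, ← add_div]
  refine div_le_div_of_nonneg_right ?_ h2.le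
  linarith

/-- The joint entropy of mutually independent variables is the sum of their entropies. -/
theorem H_tuple_of_iIndep {ι V : Type} [Fintype ι] [DecidableEq ι] [Fintype V] [DecidableEq V]
    {X : ι → P.Ω → V} (h : P.iIndep X) : P.H (P.tuple X) = ∑ i, P.H (X i) := by
  simp only [H_eq_sum, Finset.sum_neg_distrib]
  rw [Finset.sum_comm]
  congr 1
  refine Finset.sum_congr rfl fun ω _ => ?_
  rw [← Finset.mul_sum]
  rcases (P.nonneg ω).eq_or_lt with h0 | h0
  · simp [← h0]
  rw [h, Real.logb_prod]
  · rfl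
  · exact fun i _ => (P.prob_pos (X i) h0).ne'

/-- The joint entropy of the subfamily of `Z` indexed by `A`. -/
def jointH {ι V : Type} [DecidableEq ι] [Fintype V] [DecidableEq V] (Z : ι → P.Ω → V)
    (A : Finset ι) : ℝ :=
  P.H (P.tuple fun i : {x // x ∈ A} => Z i.1)

theorem tuple_restrict_eq_iff {ι V : Type} (Z : ι → P.Ω → V) (A : Finset ι) (ω ω' : P.Ω) :
    P.tuple (fun i : {x // x ∈ A} => Z i.1) ω = P.tuple (fun i : {x // x ∈ A} => Z i.1) ω' ↔
      ∀ i ∈ A, Z i ω = Z i ω' := by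
  simp [tuple, funext_iff]

section jointH

variable {ι V : Type} [DecidableEq ι] [Fintype V] [DecidableEq V] (Z : ι → P.Ω → V)

theorem jointH_empty : P.jointH Z ∅ = 0 :=
  P.H_const fun ω ω' => by simp [tuple_restrict_eq_iff]

theorem jointH_mono {A B : Finset ι} (h : A ⊆ B) : P.jointH Z A ≤ P.jointH Z B :=
  P.H_mono fun ω ω' => by
    simp only [tuple_restrict_eq_iff]
    exact fun hB i hi => hB i (h hi)

theorem jointH_submodular (A B : Finset ι) :
    P.jointH Z (A ∪ B) + P.jointH Z (A ∩ B) ≤ P.jointH Z A + P.jointH Z B := by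
  refine le_trans (le_of_eq ?_) (P.H_submodular
    (P.tuple fun i : {x // x ∈ A} => Z i.1) (P.tuple fun i : {x // x ∈ B} => Z i.1)
    (fun x (i : {x // x ∈ A ∩ B}) => x ⟨i.1, (Finset.mem_inter.1 i.2).1⟩)
    (fun x (i : {x // x ∈ A ∩ B}) => x ⟨i.1, (Finset.mem_inter.1 i.2).2⟩) rfl)
  refine congrArg₂ (· + ·) (P.H_congr fun ω ω' => ?_) rfl
  rw [Prod.ext_iff]
  simp only [tuple_restrict_eq_iff, Finset.mem_union, or_imp, forall_and]

theorem jointH_eq {α : Type} [Fintype α] [DecidableEq α] {A : Finset ι} {X : P.Ω → α}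
    (h : ∀ ω ω', (∀ i ∈ A, Z i ω = Z i ω') ↔ X ω = X ω') : P.jointH Z A = P.H X :=
  P.H_congr fun ω ω' => by rw [tuple_restrict_eq_iff, h]

end jointH

end FinProbSpace

/-- A normalized, monotone and submodular set function. -/
structure IsPolymatroid {ι : Type} [DecidableEq ι] (h : Finset ι → ℝ) : Prop where
  empty : h ∅ = 0
  mono : ∀ {A B : Finset ι}, A ⊆ B → h A ≤ h B
  submodular : ∀ A B : Finset ι, h (A ∪ B) + h (A ∩ B) ≤ h A + h B

namespace IsPolymatroid

variable {ι : Type} [DecidableEq ι] {h : Finset ι → ℝ}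

theorem union_add_le (hh : IsPolymatroid h) {A B C : Finset ι} (hA : C ⊆ A) (hB : C ⊆ B) :
    h (A ∪ B) + h C ≤ h A + h B :=
  (add_le_add_right (hh.mono (Finset.subset_inter hA hB)) _).trans (hh.submodular A B)

theorem union_image_le (hh : IsPolymatroid h) {κ : Type} [DecidableEq κ] (T : Finset ι)
    (y : κ → ι) (F : Finset κ) :
    h (T ∪ F.image y) ≤ h T + ∑ i ∈ F, (h (insert (y i) T) - h T) := by
  induction F using Finset.induction_on with
  | empty => simp
  | insert i F hi ih =>
    rw [Finset.sum_insert hi, Finset.image_insert]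
    have := hh.union_add_le (A := insert (y i) T) (B := T ∪ F.image y) (C := T)
      (Finset.subset_insert _ _) Finset.subset_union_left
    have e : insert (y i) T ∪ (T ∪ F.image y) = T ∪ insert (y i) (F.image y) := by
      ext a; simp
    rw [e] at this
    linarith

end IsPolymatroid

/-- A chain `T 0 ⊆ T 1 ⊆ ⋯ ⊆ T K` of variables together with elements `x b` (`b : B`), each
belonging to one of `N` groups, such that the transversals in `D j` determine `T (j + 1)` over
`T j`, with ranks meeting the capacity recursion with equality. -/
structure TightChain {ι B : Type} [DecidableEq ι] (K : ℕ) {N : ℕ} (h : Finset ι → ℝ)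
    (T : ℕ → Finset ι) (x : B → ι) (db : B → Fin N) (D : ℕ → Set (Fin N → B)) (L : ℝ)
    (g : ℕ → ℝ) : Prop where
  poly : IsPolymatroid h
  mono : Monotone T
  rank_succ : ∀ j < K, h (T (j + 1)) = h (T j) + L
  db_apply : ∀ j < K, ∀ q ∈ D j, ∀ n, db (q n) = n
  decodes : ∀ j < K, ∀ q ∈ D j,
    h (T (j + 1) ∪ Finset.univ.image (x ∘ q)) = h (T j ∪ Finset.univ.image (x ∘ q))
  cover : ∀ j < K, ∀ b, ∃ q ∈ D j, q (db b) = b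
  rank_zero : ∀ b, h (insert (x b) (T 0)) = h (T 0) + g 0
  rec_succ : ∀ j < K, N * g j = L + g (j + 1)
  rec_last : g K = 0
  pos : ∀ j < K, 0 < g j

namespace TightChain

variable {ι B : Type} [DecidableEq ι] {K N : ℕ} {h : Finset ι → ℝ}
  {T : ℕ → Finset ι} {x : B → ι} {db : B → Fin N} {D : ℕ → Set (Fin N → B)} {L : ℝ}
  {g : ℕ → ℝ}

theorem insert_subset_image {q : Fin N → B} (n : Fin N) (S : Finset ι) :
    insert (x (q n)) S ⊆ S ∪ Finset.univ.image (x ∘ q) := by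
  refine Finset.insert_subset (Finset.mem_union_right _ ?_) Finset.subset_union_left
  exact Finset.mem_image_of_mem (x ∘ q) (Finset.mem_univ n)

theorem rank_le (C : TightChain K h T x db D L g) {j : ℕ} (hj : j ≤ K) (b : B) :
    h (insert (x b) (T j)) ≤ h (T j) + g j := by
  induction j generalizing b with
  | zero => exact (C.rank_zero b).le
  | succ j ih =>
    obtain ⟨q, hq, hb⟩ := C.cover j hj b
    have h1 := C.poly.union_image_le (T j) (x ∘ q) Finset.univ
    have h2 : ∑ i, (h (insert ((x ∘ q) i) (T j)) - h (T j)) ≤ ∑ _i : Fin N, g j :=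
      Finset.sum_le_sum fun i _ => by
        have := ih (Nat.le_of_succ_le hj) (q i)
        simp only [Function.comp_apply]
        linarith
    have h3 := C.poly.mono (insert_subset_image (x := x) (q := q) (db b) (T (j + 1)))
    rw [hb] at h3
    simp only [Finset.sum_const, Finset.card_univ, Fintype.card_fin, nsmul_eq_mul] at h2
    linarith [C.decodes j hj q hq, C.rank_succ j hj, C.rec_succ j hj]

theorem rank_eq (C : TightChain K h T x db D L g) {j : ℕ} (hj : j ≤ K) (b : B) :
    h (insert (x b) (T j)) = h (T j) + g j := by
  induction hj using Nat.decreasingInduction generalizing b with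
  | self =>
    refine (C.rank_le le_rfl b).antisymm ?_
    rw [C.rec_last, add_zero]
    exact C.poly.mono (Finset.subset_insert _ _)
  | of_succ j hj ih =>
    refine (C.rank_le hj.le b).antisymm ?_
    obtain ⟨q, hq, hb⟩ := C.cover j hj b
    have h1 := C.poly.union_image_le (T j) (x ∘ q) Finset.univ
    have h2 : ∑ i ∈ Finset.univ.erase (db b), (h (insert ((x ∘ q) i) (T j)) - h (T j)) ≤
        ∑ _i ∈ Finset.univ.erase (db b), g j :=
      Finset.sum_le_sum fun i _ => by
        have := C.rank_le hj.le (q i)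
        simp only [Function.comp_apply]
        linarith
    have h3 := C.poly.mono (insert_subset_image (x := x) (q := q) (db b) (T (j + 1)))
    rw [← Finset.add_sum_erase _ _ (Finset.mem_univ (db b))] at h1
    have h4 : g j + ∑ _i ∈ Finset.univ.erase (db b), g j = N * g j := by
      rw [Finset.add_sum_erase _ (fun _ => g j) (Finset.mem_univ (db b))]
      simp
    simp only [Function.comp_apply, hb] at h1 h2 h3
    rw [ih b] at h3
    linarith [C.decodes j hj q hq, C.rank_succ j hj, C.rec_succ j hj]

theorem rank_union_image (C : TightChain K h T x db D L g) {j : ℕ} (hj : j < K)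
    (q : Fin N → B) :
    h (T j ∪ Finset.univ.image (x ∘ q)) ≤ h (T j) + N * g j := by
  refine (C.poly.union_image_le (T j) (x ∘ q) Finset.univ).trans_eq ?_
  simp [C.rank_eq hj.le]

/-- `b` and `c` determine each other given `T j`. -/
def Equivalent (h : Finset ι → ℝ) (T : ℕ → Finset ι) (x : B → ι) (g : ℕ → ℝ) (j : ℕ)
    (b c : B) : Prop :=
  h (insert (x b) (insert (x c) (T j))) ≤ h (T j) + g j

theorem Equivalent.symm {j : ℕ} {b c : B} (hbc : Equivalent h T x g j b c) :
    Equivalent h T x g j c b := by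
  rwa [Equivalent, Finset.insert_comm]

theorem Equivalent.trans (C : TightChain K h T x db D L g) {j : ℕ} (hj : j ≤ K) {b c d : B}
    (hbc : Equivalent h T x g j b c) (hcd : Equivalent h T x g j c d) :
    Equivalent h T x g j b d := by
  have h1 := C.poly.union_add_le (A := insert (x b) (insert (x c) (T j)))
    (B := insert (x c) (insert (x d) (T j))) (C := insert (x c) (T j))
    (by grind) (by grind)
  have h2 : h (insert (x b) (insert (x d) (T j))) ≤ _ := C.poly.mono
    (B := insert (x b) (insert (x c) (T j)) ∪ insert (x c) (insert (x d) (T j))) (by grind)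
  have h3 := C.rank_eq hj c
  unfold Equivalent at *
  linarith

theorem Equivalent.succ (C : TightChain K h T x db D L g) {j : ℕ} (hj : j < K) {b c : B}
    (hbc : Equivalent h T x g j b c) : Equivalent h T x g (j + 1) b c := by
  have hT := C.mono j.le_succ
  have h1 := C.poly.union_add_le (A := insert (x b) (insert (x c) (T j)))
    (B := insert (x c) (T (j + 1))) (C := insert (x c) (T j))
    (by grind) (by grind)
  have h2 : h (insert (x b) (insert (x c) (T (j + 1)))) ≤ _ := C.poly.mono
    (B := insert (x b) (insert (x c) (T j)) ∪ insert (x c) (T (j + 1))) (by grind)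
  have h3 := C.rank_eq hj.le c
  have h4 := C.rank_eq (Nat.succ_le_of_lt hj) c
  unfold Equivalent at *
  linarith

theorem equivalent_of_mem (C : TightChain K h T x db D L g) {j : ℕ} (hj : j < K)
    {q : Fin N → B} (hq : q ∈ D j) (n n' : Fin N) :
    Equivalent h T x g (j + 1) (q n) (q n') := by
  have h1 : h (insert (x (q n)) (insert (x (q n')) (T (j + 1)))) ≤ _ := C.poly.mono
    (Finset.insert_subset (insert_subset_image (x := x) n _ (Finset.mem_insert_self _ _))
      (insert_subset_image (x := x) (q := q) n' (T (j + 1))))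
  unfold Equivalent
  linarith [C.rank_union_image hj q, C.decodes j hj q hq, C.rank_succ j hj, C.rec_succ j hj]

theorem not_equivalent_of_mem (C : TightChain K h T x db D L g) {j : ℕ} (hj : j < K)
    {q : Fin N → B} (hq : q ∈ D j) {n n' : Fin N} (hn : n ≠ n') :
    ¬ Equivalent h T x g j (q n) (q n') := by
  intro he
  have h0 := C.poly.union_image_le (T j) (x ∘ q) (Finset.univ.erase n)
  have h1 : ∑ i ∈ Finset.univ.erase n, (h (insert ((x ∘ q) i) (T j)) - h (T j)) =
      ∑ _i ∈ Finset.univ.erase n, g j :=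
    Finset.sum_congr rfl fun i _ => by simp [C.rank_eq hj.le]
  have h2 : g j + ∑ _i ∈ Finset.univ.erase n, g j = N * g j := by
    rw [Finset.add_sum_erase _ (fun _ => g j) (Finset.mem_univ n)]
    simp
  have hmem : x (q n') ∈ (Finset.univ.erase n).image (x ∘ q) :=
    Finset.mem_image_of_mem (x ∘ q) (by simp [hn.symm])
  have h3 := C.poly.union_add_le (A := insert (x (q n)) (insert (x (q n')) (T j)))
    (B := T j ∪ (Finset.univ.erase n).image (x ∘ q)) (C := insert (x (q n')) (T j))
    (Finset.subset_insert _ _)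
    (Finset.insert_subset (Finset.mem_union_right _ hmem) Finset.subset_union_left)
  have h4 : h (T j ∪ Finset.univ.image (x ∘ q)) ≤ _ := C.poly.mono
    (B := insert (x (q n)) (insert (x (q n')) (T j)) ∪
      (T j ∪ (Finset.univ.erase n).image (x ∘ q))) (by
    have e : Finset.univ.image (x ∘ q) =
        insert (x (q n)) ((Finset.univ.erase n).image (x ∘ q)) := by
      rw [← Function.comp_apply (f := x), ← Finset.image_insert,
        Finset.insert_erase (Finset.mem_univ n)]
    rw [e]
    intro a
    simp only [Finset.mem_union, Finset.mem_insert]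
    tauto)
  have h5 := C.poly.mono (insert_subset_image (x := x) (q := q) n (T (j + 1)))
  have h6 := C.rank_eq (Nat.succ_le_of_lt hj) (q n)
  unfold Equivalent at he
  linarith [C.rank_eq hj.le (q n'), C.decodes j hj q hq, C.rank_succ j hj, C.rec_succ j hj,
    C.pos j hj]

open Classical in
theorem pow_le_card_equivalent [Fintype B] (C : TightChain K h T x db D L g) {j : ℕ}
    (hj : j < K) (b : B) (n : Fin N) :
    N ^ j ≤ (Finset.univ.filter fun c => db c = n ∧ Equivalent h T x g (j + 1) b c).card := by
  induction j generalizing b with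
  | zero =>
    obtain ⟨q, hq, hb⟩ := C.cover 0 hj b
    rw [pow_zero, Nat.one_le_iff_ne_zero, Finset.card_ne_zero]
    refine ⟨q n, ?_⟩
    rw [Finset.mem_filter]
    refine ⟨Finset.mem_univ _, C.db_apply 0 hj q hq n, ?_⟩
    simpa only [hb] using C.equivalent_of_mem hj hq (db b) n
  | succ j ih =>
    obtain ⟨q, hq, hb⟩ := C.cover (j + 1) hj b
    have hj' : j < K := Nat.lt_of_succ_lt hj
    calc N ^ (j + 1) = ∑ _i : Fin N, N ^ j := by simp [pow_succ']
      _ ≤ ∑ i : Fin N, (Finset.univ.filter fun c => db c = n ∧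
            Equivalent h T x g (j + 1) (q i) c).card :=
          Finset.sum_le_sum fun i _ => ih hj' (q i)
      _ = (Finset.univ.biUnion fun i : Fin N => Finset.univ.filter fun c => db c = n ∧
            Equivalent h T x g (j + 1) (q i) c).card := by
          refine (Finset.card_biUnion fun i _ i' _ hi => ?_).symm
          rw [Function.onFun, Finset.disjoint_left]
          intro c hc hc'
          rw [Finset.mem_filter] at hc hc'
          exact C.not_equivalent_of_mem hj hq hi (hc.2.2.trans C hj.le hc'.2.2.symm)
      _ ≤ _ := by
          refine Finset.card_le_card fun c hc => ?_
          simp only [Finset.mem_biUnion, Finset.mem_filter, Finset.mem_univ, true_and] at hc ⊢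
          obtain ⟨i, hc1, hc2⟩ := hc
          refine ⟨hc1, Equivalent.trans C hj ?_ (hc2.succ C hj)⟩
          simpa only [hb] using C.equivalent_of_mem hj hq (db b) i

end TightChain

namespace IRScheme

variable {K N : ℕ} {Mn : Fin N → ℕ} {Lw Lx : ℝ}

/-- All messages and all possible answers of a scheme, as a single family. -/
def vars (C : IRScheme K N Mn Lw Lx) :
    Fin K ⊕ (Σ n, Fin (Mn n)) → C.P.Ω → C.V ⊕ C.V'
  | .inl k => fun ω => .inl (C.W k ω)
  | .inr b => fun ω => .inr (C.A b.1 b.2 ω)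

/-- The set of the first `j` messages. -/
def firstMessages (K : ℕ) (B : Type) [DecidableEq B] (j : ℕ) : Finset (Fin K ⊕ B) :=
  (Finset.univ.filter fun k : Fin K => k.1 < j).image Sum.inl

theorem firstMessages_zero (K : ℕ) (B : Type) [DecidableEq B] : firstMessages K B 0 = ∅ := by
  simp [firstMessages]

theorem firstMessages_mono (K : ℕ) (B : Type) [DecidableEq B] :
    Monotone (firstMessages K B) := fun i j hij =>
  Finset.image_subset_image fun k => by
    simp only [Finset.mem_filter, Finset.mem_univ, true_and]
    exact fun h => h.trans_le hij

theorem firstMessages_succ {K : ℕ} (B : Type) [DecidableEq B] {j : ℕ} (hj : j < K) :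
    firstMessages K B (j + 1) = insert (Sum.inl ⟨j, hj⟩) (firstMessages K B j) := by
  rw [firstMessages, firstMessages, ← Finset.image_insert]
  congr 1
  ext k
  simp only [Finset.mem_filter, Finset.mem_univ, true_and, Finset.mem_insert, Fin.ext_iff]
  omega

theorem isPolymatroid_jointH {ι V : Type} [DecidableEq ι] [Fintype V] [DecidableEq V]
    (P : FinProbSpace) (Z : ι → P.Ω → V) : IsPolymatroid (P.jointH Z) where
  empty := P.jointH_empty Z
  mono := P.jointH_mono Z
  submodular := P.jointH_submodular Z

theorem jointH_message (C : IRScheme K N Mn Lw Lx) (k : Fin K) :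
    C.P.jointH C.vars {Sum.inl k} = Lw := by
  refine Eq.trans ?_ (C.HW k)
  exact C.P.jointH_eq _ fun ω ω' => by simp [vars]

theorem jointH_answer (C : IRScheme K N Mn Lw Lx) (b : Σ n, Fin (Mn n)) :
    C.P.jointH C.vars {Sum.inr b} = Lx := by
  refine Eq.trans ?_ (C.HA b.1 b.2)
  exact C.P.jointH_eq _ fun ω ω' => by simp [vars]

theorem jointH_messages (C : IRScheme K N Mn Lw Lx) :
    C.P.jointH C.vars (firstMessages K _ K) = K * Lw := by
  have h1 : C.P.jointH C.vars (firstMessages K _ K) = C.P.H (C.P.tuple C.W) :=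
    C.P.jointH_eq _ fun ω ω' => by
      simp [vars, firstMessages, FinProbSpace.tuple, funext_iff]
  rw [h1, C.P.H_tuple_of_iIndep C.indep]
  simp [C.HW]

theorem jointH_firstMessages_succ (C : IRScheme K N Mn Lw Lx) {j : ℕ} (hj : j < K) :
    C.P.jointH C.vars (firstMessages K _ (j + 1)) =
      C.P.jointH C.vars (firstMessages K _ j) + Lw := by
  have hP := isPolymatroid_jointH C.P C.vars
  have hle : ∀ i ∈ Finset.range K, C.P.jointH C.vars (firstMessages K _ (i + 1)) -
      C.P.jointH C.vars (firstMessages K _ i) ≤ Lw := by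
    intro i hi
    have := hP.union_add_le (Finset.empty_subset {Sum.inl ⟨i, Finset.mem_range.1 hi⟩})
      (Finset.empty_subset (firstMessages K _ i))
    rw [← Finset.insert_eq, ← firstMessages_succ, hP.empty, jointH_message] at this
    linarith
  have hsum := (Finset.sum_eq_sum_iff_of_le hle).1 (by
    rw [Finset.sum_range_sub (fun i => C.P.jointH C.vars (firstMessages K _ i)),
      jointH_messages, firstMessages_zero, hP.empty]
    simp)
  linarith [hsum j (Finset.mem_range.2 hj)]

theorem jointH_decodes (C : IRScheme K N Mn Lw Lx) (k : Fin K) {q : (n : Fin N) → Fin (Mn n)}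
    (hq : q ∈ C.Q k) (S : Finset (Fin K ⊕ (Σ n, Fin (Mn n)))) :
    C.P.jointH C.vars
        (insert (Sum.inl k) S ∪ Finset.univ.image fun n => Sum.inr ⟨n, q n⟩) =
      C.P.jointH C.vars (S ∪ Finset.univ.image fun n => Sum.inr ⟨n, q n⟩) := by
  have hP := isPolymatroid_jointH C.P C.vars
  set F : Finset (Fin K ⊕ (Σ n, Fin (Mn n))) := Finset.univ.image fun n => Sum.inr ⟨n, q n⟩
  have h1 : C.P.jointH C.vars F = C.P.H (C.P.tuple fun n => C.A n (q n)) :=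
    C.P.jointH_eq _ fun ω ω' => by simp [F, vars, FinProbSpace.tuple, funext_iff]
  have h2 : C.P.jointH C.vars (insert (Sum.inl k) F) =
      C.P.H (fun ω => (C.W k ω, C.P.tuple (fun n => C.A n (q n)) ω)) :=
    C.P.jointH_eq _ fun ω ω' => by simp [F, vars, FinProbSpace.tuple, funext_iff]
  have h3 := C.decodes k q hq
  rw [FinProbSpace.condH] at h3
  have h4 := hP.union_add_le (A := insert (Sum.inl k) F) (B := S ∪ F) (C := F)
    (Finset.subset_insert _ _) Finset.subset_union_right
  have e : insert (Sum.inl k) F ∪ (S ∪ F) = insert (Sum.inl k) S ∪ F := by grind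
  rw [e] at h4
  refine le_antisymm (by linarith) (hP.mono ?_)
  exact Finset.union_subset_union_left (Finset.subset_insert _ _)

theorem tightChain (C : IRScheme K N Mn Lw Lx) (hC : C.IsRIR) (hN : 0 < N) (hLw : 0 < Lw)
    (hLx : 0 < Lx) (hR : Lw / (N * Lx) = CK N K) :
    TightChain K (C.P.jointH C.vars) (firstMessages K _) Sum.inr Sigma.fst
      (fun j => {a | ∃ hj : j < K, ∃ q ∈ C.Q ⟨j, hj⟩, a = fun n => ⟨n, q n⟩}) Lw
      (fun j => Lw * ∑ i ∈ Finset.range (K - j), (1 / (N : ℝ)) ^ (i + 1)) where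
  poly := isPolymatroid_jointH C.P C.vars
  mono := firstMessages_mono K _
  rank_succ j hj := C.jointH_firstMessages_succ hj
  db_apply := by
    rintro j hj _ ⟨_, q, _, rfl⟩ n
    rfl
  decodes := by
    rintro j hj _ ⟨_, q, hq, rfl⟩
    rw [firstMessages_succ]
    exact C.jointH_decodes _ hq _
  cover := by
    rintro j hj ⟨n, m⟩
    obtain ⟨q, hq, hm⟩ := hC n m ⟨j, hj⟩
    exact ⟨_, ⟨hj, q, hq, rfl⟩, by simp [hm]⟩
  rank_zero b := by
    have hN' : (0 : ℝ) < N := Nat.cast_pos.2 hN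
    rw [firstMessages_zero, C.P.jointH_empty, insert_empty_eq, jointH_answer, tsub_zero, zero_add]
    rw [CK] at hR
    have hs : ∑ j ∈ Finset.range K, (1 / (N : ℝ)) ^ j ≠ 0 := by
      intro h0
      rw [h0, inv_zero] at hR
      have : 0 < Lw / (N * Lx) := by positivity
      exact this.ne' hR
    simp only [pow_succ, ← Finset.sum_mul]
    field_simp at hR ⊢
    linarith
  rec_succ j hj := by
    have hN' : (0 : ℝ) < N := Nat.cast_pos.2 hN
    obtain ⟨d, rfl⟩ := Nat.exists_eq_add_of_lt hj
    rw [show j + d + 1 - j = d + 1 by omega, show j + d + 1 - (j + 1) = d by omega,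
      Finset.sum_range_succ']
    simp only [pow_succ (1 / (N : ℝ)) (_ + 1), ← Finset.sum_mul, zero_add, pow_one]
    generalize ∑ i ∈ Finset.range d, (1 / (N : ℝ)) ^ (i + 1) = s
    field_simp
    ring
  rec_last := by simp
  pos j hj := by
    have hN' : (0 : ℝ) < N := Nat.cast_pos.2 hN
    refine mul_pos hLw (Finset.sum_pos (fun i _ => by positivity) ?_)
    rw [Finset.nonempty_range_iff]
    omega

/-- In a capacity achieving repudiative scheme every database has at least `N ^ (K - 1)`
answers. -/
theorem pow_le_of_capacity (C : IRScheme K N Mn Lw Lx) (hC : C.IsRIR) (hK : 1 ≤ K)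
    (hN : 0 < N) (hLw : 0 < Lw) (hLx : 0 < Lx) (hR : Lw / (N * Lx) = CK N K) (n : Fin N) :
    N ^ (K - 1) ≤ Mn n := by
  classical
  obtain ⟨q, _⟩ := C.Q_nonempty ⟨0, hK⟩
  refine ((C.tightChain hC hN hLw hLx hR).pow_le_card_equivalent
    (Nat.sub_lt hK one_pos) ⟨n, q n⟩ n).trans ?_
  calc _ ≤ (Finset.univ.image fun m : Fin (Mn n) => (⟨n, m⟩ : Σ n, Fin (Mn n))).card := by
        refine Finset.card_le_card ?_
        rintro ⟨n', m⟩ hm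
        obtain rfl : n' = n := (Finset.mem_filter.1 hm).2.1
        exact Finset.mem_image.2 ⟨m, Finset.mem_univ m, rfl⟩
    _ ≤ Mn n := Finset.card_image_le.trans_eq (by simp)

end IRScheme

/-- The uniform distribution on a nonempty finite type. -/
abbrev uniformSpace (Ω : Type) [Fintype Ω] [Nonempty Ω] : FinProbSpace where
  Ω := Ω
  p _ := (Fintype.card Ω : ℝ)⁻¹
  nonneg _ := by positivity
  sum_one := by simp

theorem prob_uniformSpace {Ω α : Type} [Fintype Ω] [Nonempty Ω] [DecidableEq α] (X : Ω → α)
    (a : α) : (uniformSpace Ω).prob X a =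
      (Finset.univ.filter fun ω => X ω = a).card * (Fintype.card Ω : ℝ)⁻¹ := by
  rw [← nsmul_eq_mul, ← Finset.sum_const, Finset.sum_filter]
  rfl

/-- A surjective homomorphism maps the uniform distribution to the uniform distribution. -/
theorem prob_uniformSpace_hom {Ω G : Type} [Fintype Ω] [AddGroup Ω] [Fintype G] [AddGroup G]
    [DecidableEq G] (φ : Ω →+ G) (hφ : Function.Surjective φ) (a : G) :
    (uniformSpace Ω).prob φ a = (Fintype.card G : ℝ)⁻¹ := by
  have h : ∀ b, (uniformSpace Ω).prob φ b = (uniformSpace Ω).prob φ a := fun b => by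
    rw [prob_uniformSpace, prob_uniformSpace,
      AddMonoidHom.card_fiber_eq_of_mem_range φ (hφ b) (hφ a)]
  have hsum := (uniformSpace Ω).sum_prob φ
  simp only [h, Finset.sum_const, Finset.card_univ, nsmul_eq_mul] at hsum
  exact eq_inv_of_mul_eq_one_right hsum

theorem H_uniformSpace_hom {Ω G : Type} [Fintype Ω] [AddGroup Ω] [Fintype G] [AddGroup G]
    [DecidableEq G] (φ : Ω →+ G) (hφ : Function.Surjective φ) :
    (uniformSpace Ω).H φ = Real.logb 2 (Fintype.card G) := by
  rw [FinProbSpace.H_eq_sum]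
  simp only [prob_uniformSpace_hom φ hφ, Real.logb_inv]
  rw [← Finset.sum_mul, show ∑ _ω : Ω, (Fintype.card Ω : ℝ)⁻¹ = 1 from (uniformSpace Ω).sum_one]
  ring

namespace CyclicScheme

variable {K N : ℕ} [NeZero N]

/-- Messages consist of `N ^ K` blocks of `N - 1` bits. -/
abbrev Message (K N : ℕ) [NeZero N] : Type :=
  (Fin K → Fin N) → {i : Fin N // i ≠ 0} → ZMod 2

/-- The `i`-th bit of a block, extended by zero to `i = 0`. -/
def entry (w : {i : Fin N // i ≠ 0} → ZMod 2) (i : Fin N) : ZMod 2 :=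
  if h : i ≠ 0 then w ⟨i, h⟩ else 0

theorem entry_zero (w : {i : Fin N // i ≠ 0} → ZMod 2) : entry w 0 = 0 := by
  simp [entry]

theorem entry_val (w : {i : Fin N // i ≠ 0} → ZMod 2) (i : {i : Fin N // i ≠ 0}) :
    entry w i.1 = w i := by
  simp [entry, i.2]

theorem entry_add (w w' : {i : Fin N // i ≠ 0} → ZMod 2) (i : Fin N) :
    entry (w + w') i = entry w i + entry w' i := by
  unfold entry
  split_ifs <;> simp

/-- In block `s`, the answer to the query `x` is the sum over all messages `k` of the bit of
message `k` at position `x k + s k`. -/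
def answer (x : Fin K → Fin N) : (Fin K → Message K N) →+ ((Fin K → Fin N) → ZMod 2) where
  toFun ω s := ∑ k, entry (ω k s) (x k + s k)
  map_zero' := by
    ext s
    refine Finset.sum_eq_zero fun k _ => ?_
    simp [entry]
  map_add' ω ω' := by
    ext s
    simp [entry_add, Finset.sum_add_distrib]

theorem answer_apply (x : Fin K → Fin N) (ω : Fin K → Message K N) (s : Fin K → Fin N) :
    answer x ω s = ∑ k, entry (ω k s) (x k + s k) := rfl

theorem answer_neg (x : Fin K → Fin N) (ω : Fin K → Message K N) : answer x ω (-x) = 0 := by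
  rw [answer_apply]
  exact Finset.sum_eq_zero fun k _ => by simp [entry_zero]

/-- The answer to `x` without its trivial block. -/
def reducedAnswer (x : Fin K → Fin N) :
    (Fin K → Message K N) →+ ({s : Fin K → Fin N // s ≠ -x} → ZMod 2) where
  toFun ω s := answer x ω s.1
  map_zero' := by ext; simp
  map_add' ω ω' := by ext; simp

theorem reducedAnswer_surjective (x : Fin K → Fin N) :
    Function.Surjective (reducedAnswer x) := by
  intro v
  have hex : ∀ s : {s : Fin K → Fin N // s ≠ -x}, ∃ k, x k + s.1 k ≠ 0 := by
    rintro ⟨s, hs⟩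
    by_contra! h
    exact hs (funext fun k => eq_neg_of_add_eq_zero_right (h k))
  choose κ hκ using hex
  refine ⟨fun k s _ => if hs : s ≠ -x then if κ ⟨s, hs⟩ = k then v ⟨s, hs⟩ else 0 else 0, ?_⟩
  ext s
  change ∑ k : Fin K, entry _ _ = v s
  rw [Finset.sum_eq_single (κ s)]
  · simp [entry, hκ s, s.2]
  · intro k _ hk
    simp [entry, s.2, hk.symm]
  · simp

theorem H_answer (x : Fin K → Fin N) :
    (uniformSpace (Fin K → Message K N)).H (answer x) = (N : ℝ) ^ K - 1 := by
  have h1 : (uniformSpace (Fin K → Message K N)).H (answer x) =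
      (uniformSpace (Fin K → Message K N)).H (reducedAnswer x) := by
    refine FinProbSpace.H_congr _ fun ω ω' => ⟨fun h => funext fun s => congrFun h s.1,
      fun h => funext fun s => ?_⟩
    by_cases hs : s = -x
    · rw [hs]
      exact (answer_neg x ω).trans (answer_neg x ω').symm
    · exact congrFun h ⟨s, hs⟩
  rw [h1, H_uniformSpace_hom _ (reducedAnswer_surjective x)]
  have : 1 ≤ N ^ K := Nat.one_le_pow _ _ (NeZero.pos N)
  rw [Fintype.card_fun, ZMod.card, Fintype.card_subtype_compl, Fintype.card_subtype_eq]
  have h2 : Fintype.card (Fin K → Fin N) = N ^ K := by simp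
  rw [h2, Nat.cast_pow, Nat.cast_ofNat, Real.logb_pow, Real.logb_self_eq_one one_lt_two,
    Nat.cast_sub this]
  simp

theorem H_message (k : Fin K) :
    (uniformSpace (Fin K → Message K N)).H (fun ω : Fin K → Message K N => ω k) =
      (N : ℝ) ^ K * (N - 1) := by
  have h := H_uniformSpace_hom (Pi.evalAddMonoidHom (fun _ : Fin K => Message K N) k)
    (Function.surjective_eval k)
  refine Eq.trans h ?_
  have h1 : 1 ≤ N := NeZero.pos N
  rw [Fintype.card_fun, Fintype.card_fun, ZMod.card, Fintype.card_subtype_compl,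
    Fintype.card_subtype_eq]
  have h2 : Fintype.card (Fin K → Fin N) = N ^ K := by simp
  rw [h2, Fintype.card_fin, ← pow_mul, Nat.cast_pow, Nat.cast_ofNat, Real.logb_pow,
    Real.logb_self_eq_one one_lt_two, Nat.cast_mul, Nat.cast_sub h1]
  push_cast
  ring

theorem iIndep_message :
    (uniformSpace (Fin K → Message K N)).iIndep
      (fun k (ω : Fin K → Message K N) => ω k) := by
  intro a
  have h1 := prob_uniformSpace_hom (AddMonoidHom.id (Fin K → Message K N))
    Function.surjective_id a
  have h2 : ∀ k, (uniformSpace (Fin K → Message K N)).prob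
      (fun ω : Fin K → Message K N => ω k) (a k) = (Fintype.card (Message K N) : ℝ)⁻¹ :=
    fun k => prob_uniformSpace_hom (Pi.evalAddMonoidHom (fun _ : Fin K => Message K N) k)
      (Function.surjective_eval k) (a k)
  rw [Finset.prod_congr rfl fun k _ => h2 k]
  refine Eq.trans h1 ?_
  rw [Fintype.card_fun]
  simp

/-- The queries for message `k` generated by `x`; database `n` receives the one with sum `n`. -/
def query (k : Fin K) (x : Fin K → Fin N) (n : Fin N) : Fin K → Fin N :=
  x + Pi.single k (n - ∑ i, x i)

theorem sum_query (k : Fin K) (x : Fin K → Fin N) (n : Fin N) : ∑ i, query k x n i = n := by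
  simp [query, Finset.sum_add_distrib]

theorem query_sum (k : Fin K) (x : Fin K → Fin N) : query k x (∑ i, x i) = x := by
  simp [query]

theorem eq_of_answer_eq {k : Fin K} {x : Fin K → Fin N} {ω ω' : Fin K → Message K N}
    (h : ∀ n, answer (query k x n) ω = answer (query k x n) ω') : ω k = ω' k := by
  ext s i
  have key : ∀ t : Fin N,
      entry (ω k s) t + ∑ j ∈ Finset.univ.erase k, entry (ω j s) (x j + s j) =
        entry (ω' k s) t + ∑ j ∈ Finset.univ.erase k, entry (ω' j s) (x j + s j) := by
    intro t
    have h1 := congrFun (h (t - x k - s k + ∑ i, x i)) s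
    have hk : query k x (t - x k - s k + ∑ i, x i) k + s k = t := by
      simp only [query, Pi.add_apply, Pi.single_eq_same]
      abel
    have hj : ∀ υ : Fin K → Message K N, ∑ j ∈ Finset.univ.erase k,
        entry (υ j s) (query k x (t - x k - s k + ∑ i, x i) j + s j) =
          ∑ j ∈ Finset.univ.erase k, entry (υ j s) (x j + s j) := fun υ =>
      Finset.sum_congr rfl fun j hj => by simp [query, Finset.ne_of_mem_erase hj]
    have hs : ∀ υ : Fin K → Message K N,
        answer (query k x (t - x k - s k + ∑ i, x i)) υ s =
          entry (υ k s) t + ∑ j ∈ Finset.univ.erase k, entry (υ j s) (x j + s j) := fun υ => by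
      rw [answer_apply, ← hj υ, ← Finset.add_sum_erase Finset.univ _ (Finset.mem_univ k), hk]
    rwa [hs, hs] at h1
  have h0 := key 0
  rw [entry_zero, entry_zero, zero_add, zero_add] at h0
  have h1 := key i.1
  rw [h0, entry_val, entry_val] at h1
  exact add_right_cancel h1

/-- Tuples with sum `n` are determined by all entries but the first. -/
def extend (n : Fin N) (y : Fin K → Fin N) : Fin (K + 1) → Fin N :=
  Fin.cons (n - ∑ i, y i) y

theorem extend_tail (x : Fin (K + 1) → Fin N) : extend (∑ i, x i) (Fin.tail x) = x := by
  rw [extend, Fin.sum_univ_succ, show ∑ i, Fin.tail x i = ∑ i : Fin K, x i.succ from rfl,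
    add_sub_cancel_right, Fin.cons_self_tail]

theorem sum_extend (n : Fin N) (y : Fin K → Fin N) : ∑ i, extend n y i = n := by
  simp [extend, Fin.sum_univ_succ]

/-- The scheme in which database `n` is asked the queries of sum `n`. -/
def scheme (K N : ℕ) [NeZero N] :
    IRScheme (K + 1) N (fun _ => N ^ K) ((N : ℝ) ^ (K + 1) * (N - 1)) ((N : ℝ) ^ (K + 1) - 1) where
  P := uniformSpace (Fin (K + 1) → Message (K + 1) N)
  V := Message (K + 1) N
  V' := (Fin (K + 1) → Fin N) → ZMod 2
  W k ω := ω k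
  A n m := answer (extend n (finFunctionFinEquiv.symm m))
  indep := iIndep_message
  HW := H_message
  ans_fn n m := ⟨answer (extend n (finFunctionFinEquiv.symm m)), fun _ => rfl⟩
  HA n m := H_answer _
  Q k := Finset.univ.image fun (x : Fin (K + 1) → Fin N) n =>
    finFunctionFinEquiv (Fin.tail (query k x n))
  Q_nonempty k := Finset.univ_nonempty.image _
  decodes := by
    intro k q hq
    obtain ⟨x, -, rfl⟩ := Finset.mem_image.1 hq
    rw [FinProbSpace.condH, sub_eq_zero]
    refine FinProbSpace.H_congr _ fun ω ω' => ?_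
    rw [Prod.ext_iff]
    refine ⟨And.right, fun h => ⟨eq_of_answer_eq (k := k) (x := x) fun n => ?_, h⟩⟩
    have h1 := congrFun h n
    simp only [FinProbSpace.tuple, Equiv.symm_apply_apply] at h1
    have h2 := extend_tail (query k x n)
    rw [sum_query] at h2
    rwa [h2] at h1

theorem isRIR_scheme (K N : ℕ) [NeZero N] : (scheme K N).IsRIR := by
  intro n m k
  refine ⟨_, Finset.mem_image_of_mem _
    (Finset.mem_univ (extend n (finFunctionFinEquiv.symm m))), ?_⟩
  have h := query_sum k (extend n (finFunctionFinEquiv.symm m))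
  rw [sum_extend] at h
  simp only [h]
  simp [extend]

theorem rate_eq (K : ℕ) {N : ℕ} (hN : 2 ≤ N) :
    (N : ℝ) ^ (K + 1) * (N - 1) / (N * ((N : ℝ) ^ (K + 1) - 1)) = CK N (K + 1) := by
  have h2 : (1 : ℝ) < N := by exact_mod_cast hN
  have h3 : (1 : ℝ) < (N : ℝ) ^ (K + 1) := one_lt_pow₀ h2 K.succ_ne_zero
  have h4 : (1 / (N : ℝ)) ≠ 1 := ((div_lt_one (by linarith)).2 h2).ne
  have h5 : (N : ℝ) - 1 ≠ 0 := by linarith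
  have h6 : (N : ℝ) ^ (K + 1) - 1 ≠ 0 := by linarith
  have h7 : (1 : ℝ) - N ≠ 0 := by linarith
  have h8 : (1 : ℝ) - (N : ℝ) ^ (K + 1) ≠ 0 := by linarith
  rw [CK, geom_sum_eq h4, inv_div, div_pow, one_pow]
  field_simp
  ring

end CyclicScheme

/-- Minimum upload cost of capacity achieving RIR_max, Corollary 4: every
capacity achieving RIR_max scheme has `M_n ≥ N^{K-1}` for every database `n` (upload cost at
least `(K-1) log N` bits per database), and there is a capacity achieving RIR_max scheme
with `M_n = N^{K-1}` for every `n`. -/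
theorem rir_min_upload (K N : ℕ) (hK : 1 ≤ K) (hN : 2 ≤ N) :
    (∀ (Mn : Fin N → ℕ) (Lw Lx : ℝ), 0 < Lw → 0 < Lx →
      ∀ C : IRScheme K N Mn Lw Lx, C.IsRIR → Lw / (N * Lx) = CK N K →
        ∀ n : Fin N, N ^ (K - 1) ≤ Mn n) ∧
    (∃ (Lw Lx : ℝ), 0 < Lw ∧ 0 < Lx ∧
      ∃ C : IRScheme K N (fun _ => N ^ (K - 1)) Lw Lx,
        C.IsRIR ∧ Lw / (N * Lx) = CK N K) := by
  refine ⟨fun Mn Lw Lx hLw hLx C hC hR n =>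
    C.pow_le_of_capacity hC hK (by omega) hLw hLx hR n, ?_⟩
  obtain ⟨K, rfl⟩ := Nat.exists_eq_add_of_le' hK
  have : NeZero N := ⟨by omega⟩
  have hN' : (1 : ℝ) < N := by exact_mod_cast hN
  exact ⟨(N : ℝ) ^ (K + 1) * (N - 1), (N : ℝ) ^ (K + 1) - 1,
    mul_pos (by positivity) (sub_pos.2 hN'), sub_pos.2 (one_lt_pow₀ hN' K.succ_ne_zero),
    CyclicScheme.scheme K N, CyclicScheme.isRIR_scheme K N, CyclicScheme.rate_eq K hN⟩
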